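/- arXiv:2204.01980 — 2 statements merged into one kernel-verified Lean document; each statement's English description precedes it below -/
import Mathlib

section
/- Let H = 3 000 175 332 800, let ν₃(t) = 1/(57.54 · (log t)^{2/3} · (log log t)^{1/3}), and let x ≥ exp(2.8·10^{10}). Then for all real t ≥ H, log(t · x^{ν₃(t)}) ≥ 0.18525 · (log x)^{3/5} / (log log x)^{1/5}; moreover there exists a real t ≥ H with log(t · x^{ν₃(t)}) ≤ 0.20680 · (log x)^{3/5} / (log log x)^{1/5}. In particular, 0.18525 · (log x)^{3/5}/(log log x)^{1/5} ≤ log(min_{t ≥ H} t·x^{ν₃(t)}) ≤ 0.20680 · (log x)^{3/5}/(log log x)^{1/5}. -/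
/-- The Vinogradov–Korobov zero-free region width `ν₃(t)`. -/
noncomputable def nu3 (t : ℝ) : ℝ :=
  1 / (57.54 * Real.log t ^ ((2:ℝ)/3) * Real.log (Real.log t) ^ ((1:ℝ)/3))

/-!
With `u = log t` and `X = log x` the quantity to be minimised is
`u + X / (A u^(2/3) (log u)^(1/3))`, where `A = 57.54`, and the natural scale for `u` is
`R = X^(3/5) / (log X)^(1/5)`, normalised so that `R^5 = X^3 / log X`.

Only `u ≤ R` matters for the lower bound, and there `log u ≤ (3/5) log X`. The powers of `u` cancel
in the weighted AM-GM inequality with weights `2/5` and `3/5`, so the fifth power of the sum is at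
least `(3125/108) X^3 / (A^3 log u)`, a constant multiple of `R^5`. For the upper bound one takes
`u` to be a constant multiple of `R`, for which `log u` is still a definite proportion of `log X`.
-/

namespace VinogradovKorobov

open Real

/-- The value of `log (t * x ^ ν t)` in the variables `X = log x` and `u = log t`, for the
Vinogradov–Korobov width `ν t = 1 / (A (log t)^(2/3) (log log t)^(1/3))`. -/
noncomputable def cost (A X u : ℝ) : ℝ :=
  u + X / (A * u ^ ((2 : ℝ) / 3) * log u ^ ((1 : ℝ) / 3))

/-- The order of magnitude, as a function of `X = log x`, of both the minimum of `cost A X` and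
the point where it is attained. -/
noncomputable def scale (X : ℝ) : ℝ :=
  X ^ ((3 : ℝ) / 5) / log X ^ ((1 : ℝ) / 5)

variable {A X u : ℝ}

lemma log_mul_exp_nu3_mul {t : ℝ} (ht : 0 < t) (X : ℝ) :
    log (t * exp (nu3 t * X)) = cost 57.54 X (log t) := by
  rw [log_mul ht.ne' (exp_ne_zero _), log_exp, cost, nu3, one_div_mul_eq_div]

lemma scale_pos (hX : 1 < X) : 0 < scale X :=
  div_pos (rpow_pos_of_pos (one_pos.trans hX) _) (rpow_pos_of_pos (log_pos hX) _)

lemma scale_pow_five (hX : 1 < X) : scale X ^ 5 = X ^ 3 / log X := by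
  have hX₀ : 0 ≤ X := (one_pos.trans hX).le
  rw [scale, div_pow, ← rpow_mul_natCast hX₀, ← rpow_mul_natCast (log_pos hX).le]
  norm_num

lemma log_scale (hX : 1 < X) : log (scale X) = 3 / 5 * log X - 1 / 5 * log (log X) := by
  have hX₀ : 0 < X := one_pos.trans hX
  have hL : 0 < log X := log_pos hX
  rw [scale, log_div (rpow_pos_of_pos hX₀ _).ne' (rpow_pos_of_pos hL _).ne', log_rpow hX₀,
    log_rpow hL]

lemma pow_mul_pow_le_weighted_mean_pow {p q : ℝ} (hp : 0 ≤ p) (hq : 0 ≤ q) {m n : ℕ}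
    (hmn : m + n ≠ 0) : p ^ m * q ^ n ≤ ((m * p + n * q) / (m + n)) ^ (m + n) := by
  have hs : (m + n : ℝ) ≠ 0 := by exact_mod_cast hmn
  have amgm : p ^ ((m : ℝ) / (m + n)) * q ^ ((n : ℝ) / (m + n)) ≤ (m * p + n * q) / (m + n) := by
    refine (geom_mean_le_arith_mean2_weighted (by positivity) (by positivity) hp hq ?_).trans_eq ?_
    · rw [← add_div, div_self hs]
    · ring
  calc p ^ m * q ^ n = (p ^ ((m : ℝ) / (m + n)) * q ^ ((n : ℝ) / (m + n))) ^ (m + n) := by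
        rw [mul_pow, ← rpow_mul_natCast hp, ← rpow_mul_natCast hq, Nat.cast_add,
          div_mul_cancel₀ _ hs, div_mul_cancel₀ _ hs, rpow_natCast, rpow_natCast]
    _ ≤ ((m * p + n * q) / (m + n)) ^ (m + n) := by gcongr

lemma cube_div_le_cost_pow_five (hA : 0 < A) (hX : 0 ≤ X) (hu : 1 < u) :
    3125 / 108 * (X ^ 3 / (A ^ 3 * log u)) ≤ cost A X u ^ 5 := by
  have hu₀ : 0 < u := one_pos.trans hu
  have hv : 0 < log u := log_pos hu
  have cube_u : (u ^ ((2 : ℝ) / 3)) ^ 3 = u ^ 2 := by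
    rw [← rpow_mul_natCast hu₀.le]
    norm_num
  have cube_log_u : (log u ^ ((1 : ℝ) / 3)) ^ 3 = log u := by
    rw [← rpow_mul_natCast hv.le]
    norm_num
  set q := X / (A * u ^ ((2 : ℝ) / 3) * log u ^ ((1 : ℝ) / 3)) with hq
  have amgm : (u / 2) ^ 2 * (q / 3) ^ 3 ≤ ((2 * (u / 2) + 3 * (q / 3)) / (2 + 3)) ^ 5 :=
    pow_mul_pow_le_weighted_mean_pow (m := 2) (n := 3) (by positivity) (by positivity) (by norm_num)
  calc 3125 / 108 * (X ^ 3 / (A ^ 3 * log u))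
      = 3125 * ((u / 2) ^ 2 * (q / 3) ^ 3) := by
        rw [hq, div_pow _ (3 : ℝ), div_pow X, mul_pow, mul_pow, cube_u, cube_log_u]
        field_simp
        ring
    _ ≤ 3125 * ((2 * (u / 2) + 3 * (q / 3)) / (2 + 3)) ^ 5 := by gcongr
    _ = cost A X u ^ 5 := by rw [cost, ← hq]; ring

-- `15625 / 324 = (3125 / 108) * (5 / 3)`, the second factor coming from `log u ≤ (3 / 5) log X`.
lemma mul_scale_le_cost {c : ℝ} (hA : 0 < A) (hX : exp 1 ≤ X) (hu : 1 < u) (hc : c ≤ 1)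
    (hAc : 324 * A ^ 3 * c ^ 5 ≤ 15625) : c * scale X ≤ cost A X u := by
  have hX₁ : 1 < X := (one_lt_exp_iff.2 one_pos).trans_le hX
  have hX₀ : 0 < X := one_pos.trans hX₁
  have hL : 1 ≤ log X := (le_log_iff_exp_le hX₀).2 hX
  have hv : 0 < log u := log_pos hu
  have hu_le : u ≤ cost A X u := le_add_of_nonneg_right (by positivity)
  rcases le_total (scale X) u with hRu | huR
  · exact (mul_le_of_le_one_left (scale_pos hX₁).le hc).trans (hRu.trans hu_le)
  have log_u_le : log u ≤ 3 / 5 * log X := by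
    have := log_le_log (one_pos.trans hu) huR
    linarith [log_scale hX₁, log_nonneg hL]
  refine le_of_pow_le_pow_left₀ (n := 5) (by norm_num) (by linarith) ?_
  calc (c * scale X) ^ 5 = c ^ 5 * X ^ 3 / log X := by
        rw [mul_pow, scale_pow_five hX₁, mul_div_assoc]
    _ ≤ 3125 / 108 * (X ^ 3 / (A ^ 3 * log u)) := by
        have hc₅ : c ^ 5 ≤ 15625 / (324 * A ^ 3) := by
          rwa [le_div_iff₀ (by positivity), mul_comm]
        calc c ^ 5 * X ^ 3 / log X ≤ 15625 / (324 * A ^ 3) * X ^ 3 / log X := by gcongr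
          _ = 3125 / 108 * (X ^ 3 / (A ^ 3 * (3 / 5 * log X))) := by field_simp; norm_num
          _ ≤ 3125 / 108 * (X ^ 3 / (A ^ 3 * log u)) := by gcongr
    _ ≤ cost A X u ^ 5 := cube_div_le_cost_pow_five hA hX₀.le hu

lemma cost_cube_mul_scale_le {b k : ℝ} (hA : 0 < A) (hX : 1 < X) (hb : 0 < b) (hk : 0 < k)
    (hlog : log X ≤ k ^ 3 * log (b ^ 3 * scale X)) :
    cost A X (b ^ 3 * scale X) ≤ (b ^ 3 + k / (A * b ^ 2)) * scale X := by
  have hL : 0 < log X := log_pos hX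
  have hR : 0 < scale X := scale_pos hX
  rw [cost]
  set R := scale X
  set v := log (b ^ 3 * R)
  have hv : 0 < v := pos_of_mul_pos_right (hL.trans_le hlog) (by positivity)
  have cube_rpow_two_thirds : (b ^ 3 * R) ^ ((2 : ℝ) / 3) = b ^ 2 * R ^ ((2 : ℝ) / 3) := by
    rw [mul_rpow (by positivity) hR.le, ← rpow_natCast_mul hb.le]
    norm_num
  have X_le : X ≤ k * R * (R ^ ((2 : ℝ) / 3) * v ^ ((1 : ℝ) / 3)) := by
    refine le_of_pow_le_pow_left₀ (n := 3) (by norm_num) (by positivity) ?_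
    calc X ^ 3 = R ^ 5 * log X := by rw [scale_pow_five hX, div_mul_cancel₀ _ hL.ne']
      _ ≤ R ^ 5 * (k ^ 3 * v) := by gcongr
      _ = (k * R * (R ^ ((2 : ℝ) / 3) * v ^ ((1 : ℝ) / 3))) ^ 3 := by
        rw [mul_pow, mul_pow, mul_pow, ← rpow_mul_natCast hR.le, ← rpow_mul_natCast hv.le]
        norm_num
        ring
  rw [add_mul, add_le_add_iff_left, cube_rpow_two_thirds, div_le_iff₀ (by positivity)]
  refine X_le.trans_eq ?_
  field_simp

lemma log_le_mul_log_mul_scale (hX : 2 ^ 25 ≤ X) :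
    log X ≤ 1.354 ^ 3 * log (0.43 ^ 3 * scale X) := by
  have hX₁ : 1 < X := by linarith
  have hL : 25 * log 2 ≤ log X := le_log_of_pow_le two_pos hX
  have log_log_le : log (log X) ≤ 4 * log 2 + log X / 2 ^ 4 - 1 := by
    have tangent := log_le_sub_one_of_pos (show 0 < log X / 2 ^ 4 by linarith [log_pos hX₁])
    rw [log_div (log_pos hX₁).ne' (by norm_num), log_pow, Nat.cast_ofNat] at tangent
    linarith
  have log_const : -4 * log 2 ≤ log (0.43 ^ 3) := by
    exact_mod_cast (zpow_le_iff_le_log (n := -4) (y := 0.43 ^ (3 : ℕ)) two_pos (by norm_num)).1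
      (by norm_num)
  rw [log_mul (by norm_num) (scale_pos hX₁).ne', log_scale hX₁]
  linarith [log_two_gt_d9, log_two_lt_d9]

lemma log_height_le_mul_scale (hX : 2 ^ 25 ≤ X) :
    log 3000175332800 ≤ 0.43 ^ 3 * scale X := by
  have hX₁ : 1 < X := by linarith
  have log_height_le : log 3000175332800 ≤ 42 * log 2 :=
    (le_pow_iff_log_le (n := 42) (by norm_num) two_pos).1 (by norm_num)
  have le_mul_scale : (2 : ℝ) ^ 6 ≤ 0.43 ^ 3 * scale X := by
    refine (pow_le_iff_le_log two_pos (mul_pos (by norm_num) (scale_pos hX₁))).2 ?_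
    push_cast
    have hL : 25 * log 2 ≤ log X := le_log_of_pow_le two_pos hX
    linarith [log_le_mul_log_mul_scale hX, log_two_gt_d9]
  linarith [log_two_lt_d9]

end VinogradovKorobov

open VinogradovKorobov in
theorem T_bounds_nu3_general (x : ℝ) (hx : Real.exp (2 ^ 25) ≤ x) :
    (∀ t : ℝ, Real.exp 1 < t →
      0.18525 * Real.log x ^ ((3:ℝ)/5) / Real.log (Real.log x) ^ ((1:ℝ)/5) ≤
        Real.log (t * Real.exp (nu3 t * Real.log x))) ∧
    (∃ t : ℝ, (3000175332800 : ℝ) ≤ t ∧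
      Real.log (t * Real.exp (nu3 t * Real.log x)) ≤
        0.20680 * Real.log x ^ ((3:ℝ)/5) / Real.log (Real.log x) ^ ((1:ℝ)/5)) := by
  have hX : 2 ^ 25 ≤ Real.log x := (Real.le_log_iff_exp_le ((Real.exp_pos _).trans_le hx)).2 hx
  rw [mul_div_assoc, mul_div_assoc, ← scale]
  constructor
  · intro t ht
    have ht₀ : 0 < t := (Real.exp_pos 1).trans ht
    rw [log_mul_exp_nu3_mul ht₀]
    exact mul_scale_le_cost (by norm_num) (by linarith [Real.exp_one_lt_d9])
      ((Real.lt_log_iff_exp_lt ht₀).2 ht) (by norm_num) (by norm_num)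
  · have hX₁ : 1 < Real.log x := by linarith
    -- `0.43` is close to the minimiser `b = (2 * 1.354 / (3 * 57.54)) ^ (1 / 5)` of
    -- `b ^ 3 + 1.354 / (57.54 * b ^ 2)`.
    refine ⟨Real.exp (0.43 ^ 3 * scale (Real.log x)),
      (Real.log_le_iff_le_exp (by norm_num)).1 (log_height_le_mul_scale hX), ?_⟩
    rw [log_mul_exp_nu3_mul (Real.exp_pos _), Real.log_exp]
    refine (cost_cube_mul_scale_le (by norm_num) hX₁ (by norm_num) (by norm_num)
      (log_le_mul_log_mul_scale hX)).trans ?_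
    exact mul_le_mul_of_nonneg_right (by norm_num) (scale_pos hX₁).le

theorem T_bounds_nu3 (x : ℝ) (hx : Real.exp (2.8e10) ≤ x) :
    (∀ t : ℝ, (3000175332800 : ℝ) ≤ t →
      0.18525 * Real.log x ^ ((3:ℝ)/5) / Real.log (Real.log x) ^ ((1:ℝ)/5) ≤
        Real.log (t * Real.exp (nu3 t * Real.log x))) ∧
    (∃ t : ℝ, (3000175332800 : ℝ) ≤ t ∧
      Real.log (t * Real.exp (nu3 t * Real.log x)) ≤
        0.20680 * Real.log x ^ ((3:ℝ)/5) / Real.log (Real.log x) ^ ((1:ℝ)/5)) :=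
  (T_bounds_nu3_general x ((Real.exp_le_exp.2 (by norm_num)).trans hx)).imp_left
    fun lower t ht ↦ lower t (by linarith [Real.exp_one_lt_d9])
end

section
/- Let H = 3 000 175 332 800, let ν₃(t) = 1/(57.54 · (log t)^{2/3} · (log log t)^{1/3}), and let x ≥ exp(2.8·10^{10}). Then there exists a real t₀ ≥ H such that the function t ↦ x^{−ν₃(t)}/t is monotone increasing on [H, t₀] and monotone decreasing on [t₀, ∞), and t₀ satisfies B₀ · (log x)^{3/5}/(log log x)^{1/5} ≤ log t₀ ≤ B₁ · (log x)^{3/5}/(log log x)^{1/5}, where B₀ = (2/(3·57.54))^{3/5} · (5/3)^{1/5} and B₁ = 0.08228. -/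
/-!
Put `L = log x` and `u = log t`, and replace the constants of `ν₃` by general `c`, `a`, `b`. Then
`x ^ (-ν(t)) / t = exp (-Ψ(u))` with `Ψ(u) = u + L / (c u ^ a (log u) ^ b)`, and
`Ψ'(u) = 1 - L / K(u)` with `K(u) = c u ^ (a + 1) (log u) ^ b / (a + b / log u)`. As `K` increases,
the maximum is at the solution of `K(u) = L`, so bounding it from both sides means comparing `K`
with `L` at the two bounds. These have the form `B * L ^ (1 / (a + 1)) / (log L) ^ (b / (a + 1))`,
where `K / L` simplifies to an expression in `log u` and `log L` alone.
-/

open Real Set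

section General

variable {a b c B L u u₀ u₁ u₂ : ℝ}

/-- The width `1 / (c (log t) ^ a (log log t) ^ b)` of a zero-free region; `nu3` is the case
`c = 57.54`, `a = 2 / 3`, `b = 1 / 3`. -/
noncomputable def vkWidth (c a b t : ℝ) : ℝ :=
  1 / (c * log t ^ a * log (log t) ^ b)

/-- The function `Ψ` of `u = log t` with `x ^ (-vkWidth c a b t) / t = exp (-Ψ)`,
where `L = log x`. -/
noncomputable def vkExponent (c a b L u : ℝ) : ℝ :=
  u + L / (c * u ^ a * log u ^ b)

/-- The value of `L` for which `u` is the critical point of `vkExponent c a b L`. -/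
noncomputable def vkThreshold (c a b u : ℝ) : ℝ :=
  c * u ^ (a + 1) * log u ^ b / (a + b / log u)

/-- The order of magnitude, as a function of `L`, of the critical point of `vkExponent c a b L`. -/
noncomputable def vkScale (a b L : ℝ) : ℝ :=
  L ^ (1 / (a + 1)) / log L ^ (b / (a + 1))

/-- The constant `B₀` for which `B₀ * vkScale a b L`, with `L` large, bounds from below the critical
point of `vkExponent c a b L`; it is also the limit of their ratio as `L → ∞`. -/
noncomputable def vkLowerConst (c a b : ℝ) : ℝ :=
  (a / c) ^ (1 / (a + 1)) * (a + 1) ^ (b / (a + 1))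

lemma exp_neg_vkWidth_mul_div {t : ℝ} (ht : 0 < t) :
    exp (-(vkWidth c a b t) * L) / t = exp (-vkExponent c a b L (log t)) := by
  rw [vkExponent, neg_add_rev, exp_add, exp_neg (log t), exp_log ht, ← div_eq_mul_inv, vkWidth,
    neg_mul, one_div_mul_eq_div]

lemma hasDerivAt_vkExponent (ha : 0 < a) (hb : 0 ≤ b) (hc : 0 < c) (hu : 1 < u) :
    HasDerivAt (vkExponent c a b L) (1 - L / vkThreshold c a b u) u := by
  have hu0 : 0 < u := one_pos.trans hu
  have hv : 0 < log u := log_pos hu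
  have hpow : HasDerivAt (fun s => c * s ^ a) (c * (a * u ^ (a - 1))) u :=
    (hasDerivAt_rpow_const (.inl hu0.ne')).const_mul c
  have hlog : HasDerivAt (fun s => log s ^ b) (u⁻¹ * b * log u ^ (b - 1)) u :=
    (hasDerivAt_log hu0.ne').rpow_const (.inl hv.ne')
  have hden : c * u ^ a * log u ^ b ≠ 0 := by positivity
  refine ((hasDerivAt_id u).add
    ((hasDerivAt_const u L).div (hpow.mul hlog) hden)).congr_deriv ?_
  rw [vkThreshold, rpow_sub_one hu0.ne', rpow_sub_one hv.ne', rpow_add_one hu0.ne']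
  have : 0 < a * log u + b := by positivity
  simp only [Pi.mul_apply]
  field_simp
  ring

lemma vkThreshold_pos (ha : 0 < a) (hb : 0 ≤ b) (hc : 0 < c) (hu : 1 < u) :
    0 < vkThreshold c a b u := by
  have := log_pos hu
  unfold vkThreshold
  positivity

lemma monotoneOn_vkThreshold (ha : 0 < a) (hb : 0 ≤ b) (hc : 0 ≤ c) :
    MonotoneOn (vkThreshold c a b) (Ioi 1) := by
  intro s (hs : 1 < s) t (ht : 1 < t) hst
  have : 0 < s := one_pos.trans hs
  have := log_pos hs
  have := log_pos ht
  unfold vkThreshold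
  gcongr

lemma continuousOn_vkThreshold (ha : 0 < a) (hb : 0 ≤ b) :
    ContinuousOn (vkThreshold c a b) (Ioi 1) := by
  intro s (hs : 1 < s)
  have hs0 : s ≠ 0 := (one_pos.trans hs).ne'
  have hv : 0 < log s := log_pos hs
  have hden : a + b / log s ≠ 0 := by positivity
  unfold vkThreshold
  exact ContinuousAt.continuousWithinAt
    (by fun_prop (disch := first | assumption | exact hv.ne' | exact .inl ‹_› | exact .inl hv.ne'))

lemma exists_vkThreshold_eq (ha : 0 < a) (hb : 0 ≤ b) (hu₁ : 1 < u₁) (hu : u₁ ≤ u₂)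
    (h₁ : vkThreshold c a b u₁ ≤ L) (h₂ : L ≤ vkThreshold c a b u₂) :
    ∃ u ∈ Icc u₁ u₂, vkThreshold c a b u = L :=
  intermediate_value_Icc hu
    ((continuousOn_vkThreshold ha hb).mono fun _ hs => hu₁.trans_le hs.1) ⟨h₁, h₂⟩

lemma antitoneOn_vkExponent (ha : 0 < a) (hb : 0 ≤ b) (hc : 0 < c) (hu₀ : 1 < u₀) :
    AntitoneOn (vkExponent c a b (vkThreshold c a b u₀)) (Ioc 1 u₀) := by
  have hderiv : ∀ u ∈ Ioc 1 u₀, HasDerivAt (vkExponent c a b (vkThreshold c a b u₀)) _ u :=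
    fun u hu => hasDerivAt_vkExponent ha hb hc hu.1
  refine antitoneOn_of_hasDerivWithinAt_nonpos (convex_Ioc _ _)
    (fun u hu => (hderiv u hu).continuousAt.continuousWithinAt)
    (fun u hu => (hderiv u (interior_subset hu)).hasDerivWithinAt) fun u hu => ?_
  obtain ⟨hu1, hle⟩ := interior_subset hu
  rw [sub_nonpos, one_le_div (vkThreshold_pos ha hb hc hu1)]
  exact monotoneOn_vkThreshold ha hb hc.le hu1 hu₀ hle

lemma monotoneOn_vkExponent (ha : 0 < a) (hb : 0 ≤ b) (hc : 0 < c) (hu₀ : 1 < u₀) :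
    MonotoneOn (vkExponent c a b (vkThreshold c a b u₀)) (Ici u₀) := by
  have hderiv : ∀ u ∈ Ici u₀, HasDerivAt (vkExponent c a b (vkThreshold c a b u₀)) _ u :=
    fun u hu => hasDerivAt_vkExponent ha hb hc (hu₀.trans_le hu)
  refine monotoneOn_of_hasDerivWithinAt_nonneg (convex_Ici _)
    (fun u hu => (hderiv u hu).continuousAt.continuousWithinAt)
    (fun u hu => (hderiv u (interior_subset hu)).hasDerivWithinAt) fun u hu => ?_
  have hle : u₀ ≤ u := interior_subset hu
  have hu1 : 1 < u := hu₀.trans_le hle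
  rw [sub_nonneg, div_le_one (vkThreshold_pos ha hb hc hu1)]
  exact monotoneOn_vkThreshold ha hb hc.le hu₀ hu1 hle

lemma monotoneOn_exp_neg_vkWidth (ha : 0 < a) (hb : 0 ≤ b) (hc : 0 < c) (hu₀ : 1 < u₀) :
    MonotoneOn (fun t => exp (-(vkWidth c a b t) * vkThreshold c a b u₀) / t)
      (Ioc (exp 1) (exp u₀)) := by
  have hlog : MapsTo log (Ioc (exp 1) (exp u₀)) (Ioc 1 u₀) := fun t ht =>
    have ht0 := (exp_pos 1).trans ht.1
    ⟨(lt_log_iff_exp_lt ht0).2 ht.1, (log_le_iff_le_exp ht0).2 ht.2⟩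
  intro s hs t ht hst
  have hs0 : 0 < s := (exp_pos 1).trans hs.1
  simp only [exp_neg_vkWidth_mul_div hs0, exp_neg_vkWidth_mul_div (hs0.trans_le hst), exp_le_exp,
    neg_le_neg_iff]
  exact antitoneOn_vkExponent ha hb hc hu₀ (hlog hs) (hlog ht) (log_le_log hs0 hst)

lemma antitoneOn_exp_neg_vkWidth (ha : 0 < a) (hb : 0 ≤ b) (hc : 0 < c) (hu₀ : 1 < u₀) :
    AntitoneOn (fun t => exp (-(vkWidth c a b t) * vkThreshold c a b u₀) / t) (Ici (exp u₀)) := by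
  have hlog : MapsTo log (Ici (exp u₀)) (Ici u₀) := fun t ht =>
    (le_log_iff_exp_le ((exp_pos u₀).trans_le ht)).2 ht
  intro s hs t ht hst
  have hs0 : 0 < s := (exp_pos u₀).trans_le hs
  simp only [exp_neg_vkWidth_mul_div hs0, exp_neg_vkWidth_mul_div (hs0.trans_le hst), exp_le_exp,
    neg_le_neg_iff]
  exact monotoneOn_vkExponent ha hb hc hu₀ (hlog hs) (hlog ht) (log_le_log hs0 hst)

lemma vkScale_pos (hL : 1 < L) : 0 < vkScale a b L := by
  have := log_pos hL
  unfold vkScale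
  positivity

lemma log_mul_vkScale (hB : 0 < B) (hL : 1 < L) :
    log (B * vkScale a b L) = log B + (log L - b * log (log L)) / (a + 1) := by
  have hL0 : 0 < L := one_pos.trans hL
  have hl : 0 < log L := log_pos hL
  rw [log_mul hB.ne' (vkScale_pos hL).ne', vkScale, log_div (by positivity) (by positivity),
    log_rpow hL0, log_rpow hl]
  ring

lemma rpow_le_vkScale (ha : 0 < a) (hb : 0 ≤ b) (hL : 1 < L) :
    L ^ ((1 - b) / (a + 1)) ≤ vkScale a b L := by
  have hL0 : 0 < L := one_pos.trans hL
  have hl : 0 < log L := log_pos hL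
  rw [sub_div, rpow_sub hL0, vkScale]
  gcongr
  exact log_le_self hL0.le

lemma vkScale_rpow_add_one (ha : 0 < a) (hL : 1 < L) :
    vkScale a b L ^ (a + 1) = L / log L ^ b := by
  have hL0 : 0 < L := one_pos.trans hL
  have hl : 0 < log L := log_pos hL
  rw [vkScale, div_rpow (by positivity) (by positivity), ← rpow_mul hL0.le, ← rpow_mul hl.le,
    one_div_mul_cancel (by positivity), rpow_one, div_mul_cancel₀ _ (by positivity)]

lemma vkThreshold_mul_vkScale (ha : 0 < a) (hB : 0 ≤ B) (hL : 1 < L)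
    (hv : 0 ≤ log (B * vkScale a b L)) :
    vkThreshold c a b (B * vkScale a b L) =
      L * (c * B ^ (a + 1) * (log (B * vkScale a b L) / log L) ^ b /
        (a + b / log (B * vkScale a b L))) := by
  have hl : 0 < log L := log_pos hL
  rw [div_rpow hv hl.le, vkThreshold, mul_rpow hB (vkScale_pos hL).le, vkScale_rpow_add_one ha hL]
  ring

lemma vkLowerConst_pos (ha : 0 < a) (hc : 0 < c) : 0 < vkLowerConst c a b := by
  unfold vkLowerConst
  positivity

lemma vkLowerConst_rpow_add_one (ha : 0 < a) (hc : 0 < c) :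
    vkLowerConst c a b ^ (a + 1) = a / c * (a + 1) ^ b := by
  rw [vkLowerConst, mul_rpow (by positivity) (by positivity), ← rpow_mul (by positivity),
    ← rpow_mul (by positivity), one_div_mul_cancel (by positivity), rpow_one,
    div_mul_cancel₀ _ (by positivity)]

lemma log_vkLowerConst_mul_vkScale_le (ha : 0 < a) (hb : 0 ≤ b) (hac : a ≤ c)
    (hL : a + 1 ≤ log L) (hL1 : 1 < L) :
    log (vkLowerConst c a b * vkScale a b L) ≤ log L / (a + 1) := by
  have hc : 0 < c := ha.trans_le hac
  have hac' : log (a / c) ≤ 0 := log_nonpos (by positivity) (div_le_one_of_le₀ hac hc.le)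
  have hloglog : b * log (a + 1) ≤ b * log (log L) := by gcongr
  have hconst : log (vkLowerConst c a b) = (log (a / c) + b * log (a + 1)) / (a + 1) := by
    rw [vkLowerConst, log_mul (by positivity) (by positivity), log_rpow (by positivity),
      log_rpow (by positivity)]
    ring
  rw [log_mul_vkScale (vkLowerConst_pos ha hc) hL1, hconst, ← add_div]
  gcongr
  linarith

lemma vkThreshold_vkLowerConst_mul_vkScale_le (ha : 0 < a) (hb : 0 ≤ b) (hac : a ≤ c)
    (hL : a + 1 ≤ log L) (hL1 : 1 < L) (hv : 0 < log (vkLowerConst c a b * vkScale a b L)) :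
    vkThreshold c a b (vkLowerConst c a b * vkScale a b L) ≤ L := by
  have hc : 0 < c := ha.trans_le hac
  have hl : 0 < log L := log_pos hL1
  have hlog := log_vkLowerConst_mul_vkScale_le ha hb hac hL hL1
  rw [vkThreshold_mul_vkScale ha (vkLowerConst_pos ha hc).le hL1 hv.le,
    vkLowerConst_rpow_add_one ha hc]
  set v := log (vkLowerConst c a b * vkScale a b L)
  have hratio : v / log L ≤ (a + 1)⁻¹ := by
    rwa [div_le_iff₀ hl, inv_mul_eq_div]
  refine mul_le_of_le_one_right (one_pos.trans hL1).le ?_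
  calc c * (a / c * (a + 1) ^ b) * (v / log L) ^ b / (a + b / v)
      ≤ c * (a / c * (a + 1) ^ b) * (a + 1)⁻¹ ^ b / a := by
        gcongr
        exact le_add_of_nonneg_right (by positivity)
    _ = 1 := by
        rw [inv_rpow (by positivity)]
        field_simp

end General

section Numerical

variable {L l v : ℝ}

lemma vkScale_nu3 (L : ℝ) :
    vkScale (2 / 3) (1 / 3) L = L ^ ((3 : ℝ) / 5) / log L ^ ((1 : ℝ) / 5) := by
  norm_num [vkScale]

lemma vkLowerConst_nu3 :
    vkLowerConst 57.54 (2 / 3) (1 / 3) =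
      (2 / (3 * 57.54) : ℝ) ^ ((3 : ℝ) / 5) * ((5 : ℝ) / 3) ^ ((1 : ℝ) / 5) := by
  norm_num [vkLowerConst]

lemma vkLowerConst_nu3_pow_five :
    vkLowerConst 57.54 (2 / 3) (1 / 3) ^ 5 = (2 / (3 * 57.54)) ^ 3 * (5 / 3) := by
  rw [vkLowerConst_nu3, mul_pow, ← rpow_mul_natCast (by norm_num),
    ← rpow_mul_natCast (by norm_num)]
  norm_num

lemma le_vkLowerConst_nu3 : 0.07 ≤ vkLowerConst 57.54 (2 / 3) (1 / 3) := by
  refine le_of_pow_le_pow_left₀ (n := 5) (by norm_num)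
    (vkLowerConst_pos (by norm_num) (by norm_num)).le ?_
  rw [vkLowerConst_nu3_pow_five]
  norm_num

lemma vkLowerConst_nu3_le : vkLowerConst 57.54 (2 / 3) (1 / 3) ≤ 0.08228 := by
  refine le_of_pow_le_pow_left₀ (n := 5) (by norm_num) (by norm_num) ?_
  rw [vkLowerConst_nu3_pow_five]
  norm_num

lemma le_vkScale_nu3 (hL : 10 ^ 10 ≤ L) : 10 ^ 4 ≤ vkScale (2 / 3) (1 / 3) L := by
  calc (10 : ℝ) ^ 4 = (10 ^ 10) ^ ((1 - 1 / 3 : ℝ) / (2 / 3 + 1)) := by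
        rw [← rpow_natCast_mul (by norm_num), ← rpow_natCast]
        norm_num
    _ ≤ L ^ ((1 - 1 / 3 : ℝ) / (2 / 3 + 1)) := by gcongr
    _ ≤ vkScale (2 / 3) (1 / 3) L :=
        rpow_le_vkScale (by norm_num) (by norm_num) (by linarith)

set_option exponentiation.threshold 500 in
lemma le_log_of_le (hL : 2.8e10 ≤ L) : 24.05 ≤ log L := by
  have hpow : exp 1 ^ 481 ≤ (2.8e10 : ℝ) ^ 20 :=
    calc exp 1 ^ 481 ≤ (2.7182818286 : ℝ) ^ 481 := by gcongr; exact exp_one_lt_d9.le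
      _ ≤ 2.8e10 ^ 20 := by norm_num
  have hlog := log_le_log (by positivity) hpow
  rw [log_pow, log_pow, log_exp] at hlog
  push_cast at hlog
  have := log_le_log (by norm_num) hL
  linarith

lemma log_div_pow_le : log (24 / 0.08228 ^ 5) ≤ 47 / 3 := by
  have hpow : (24 / 0.08228 ^ 5 : ℝ) ^ 3 ≤ exp 1 ^ 47 :=
    calc (24 / 0.08228 ^ 5 : ℝ) ^ 3 ≤ 2.7182818283 ^ 47 := by norm_num
      _ ≤ exp 1 ^ 47 := by gcongr; exact exp_one_gt_d9.le
  have hlog := log_le_log (by positivity) hpow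
  rw [log_pow, log_pow, log_exp] at hlog
  push_cast at hlog
  linarith

lemma le_five_mul_log_mul_vkScale (hL : 1 < L) :
    71 / 24 * log L - 44 / 3 ≤ 5 * log (0.08228 * vkScale (2 / 3) (1 / 3) L) := by
  have hl : 0 < log L := log_pos hL
  -- The upper bound is tightest at the smallest admissible `log L`, just above `24`.
  have htangent : log (log L) - log 24 ≤ log L / 24 - 1 := by
    rw [← log_div hl.ne' (by norm_num)]
    exact log_le_sub_one_of_pos (by positivity)
  have hconst := log_div_pow_le
  rw [log_div (by norm_num) (by norm_num), log_pow] at hconst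
  push_cast at hconst
  have hlog : 5 * log (0.08228 * vkScale (2 / 3) (1 / 3) L) =
      5 * log 0.08228 + 3 * log L - log (log L) := by
    rw [log_mul_vkScale (by norm_num) hL]
    ring
  linarith

lemma cubic_mul_le_quartic (hv : 11.296 ≤ v) (hl : 71 / 24 * l - 44 / 3 ≤ 5 * v) :
    (2 * v + 1) ^ 3 * l ≤ (3 * 57.54) ^ 3 * 0.08228 ^ 5 * v ^ 4 := by
  obtain ⟨s, hs, rfl⟩ : ∃ s, 0 ≤ s ∧ v = 11.296 + s := ⟨v - 11.296, by linarith, by ring⟩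
  calc (2 * (11.296 + s) + 1) ^ 3 * l
      ≤ (2 * (11.296 + s) + 1) ^ 3 * (24 / 71 * (5 * (11.296 + s) + 44 / 3)) := by
        gcongr
        linarith
    _ ≤ (3 * 57.54) ^ 3 * 0.08228 ^ 5 * (11.296 + s) ^ 4 := by
        rw [← sub_nonneg]
        ring_nf
        positivity

lemma le_vkThreshold_mul_vkScale_nu3 (hL : 2.8e10 ≤ L) :
    L ≤ vkThreshold 57.54 (2 / 3) (1 / 3) (0.08228 * vkScale (2 / 3) (1 / 3) L) := by
  have hL1 : 1 < L := by linarith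
  have hl := le_log_of_le hL
  have : 0 < log L := by linarith
  have htangent := le_five_mul_log_mul_vkScale hL1
  have hv : 11.296 ≤ log (0.08228 * vkScale (2 / 3) (1 / 3) L) := by linarith
  rw [vkThreshold_mul_vkScale (by norm_num) (by norm_num) hL1 (by linarith)]
  set v := log (0.08228 * vkScale (2 / 3) (1 / 3) L)
  have : 0 < v := by linarith
  refine le_mul_of_one_le_right (by linarith) ?_
  rw [← one_le_pow_iff_of_nonneg (by positivity) three_ne_zero, div_pow, mul_pow, mul_pow,
    ← rpow_mul_natCast (by norm_num), ← rpow_mul_natCast (by positivity),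
    show ((2 : ℝ) / 3 + 1) * (3 : ℕ) = (5 : ℕ) by norm_num,
    show (1 : ℝ) / 3 * (3 : ℕ) = 1 by norm_num, rpow_natCast, rpow_one,
    one_le_div (by positivity)]
  calc (2 / 3 + 1 / 3 / v) ^ 3 = (2 * v + 1) ^ 3 * log L / (27 * v ^ 3 * log L) := by
        field_simp
        norm_num
    _ ≤ (3 * 57.54) ^ 3 * 0.08228 ^ 5 * v ^ 4 / (27 * v ^ 3 * log L) :=
        div_le_div_of_nonneg_right (cubic_mul_le_quartic hv htangent) (by positivity)
    _ = 57.54 ^ 3 * 0.08228 ^ 5 * (v / log L) := by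
        field_simp
        ring

lemma le_exp_thirty : (3000175332800 : ℝ) ≤ exp 30 :=
  calc (3000175332800 : ℝ) ≤ 2.7 ^ 30 := by norm_num
    _ ≤ exp 1 ^ 30 := by gcongr; linarith [exp_one_gt_d9]
    _ = exp 30 := by rw [← exp_nat_mul]; norm_num

lemma exists_vkThreshold_nu3_eq (hL : 2.8e10 ≤ L) :
    ∃ u, 30 ≤ u ∧ vkThreshold 57.54 (2 / 3) (1 / 3) u = L ∧
      vkLowerConst 57.54 (2 / 3) (1 / 3) * vkScale (2 / 3) (1 / 3) L ≤ u ∧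
      u ≤ 0.08228 * vkScale (2 / 3) (1 / 3) L := by
  have hL1 : 1 < L := by linarith
  have hscale : 10 ^ 4 ≤ vkScale (2 / 3) (1 / 3) L := le_vkScale_nu3 (by linarith)
  have hlower : 30 ≤ vkLowerConst 57.54 (2 / 3) (1 / 3) * vkScale (2 / 3) (1 / 3) L :=
    calc (30 : ℝ) ≤ 0.07 * 10 ^ 4 := by norm_num
      _ ≤ _ := mul_le_mul le_vkLowerConst_nu3 hscale (by norm_num)
        (vkLowerConst_pos (by norm_num) (by norm_num)).le
  obtain ⟨u, ⟨hlo, hhi⟩, hu⟩ := exists_vkThreshold_eq (by norm_num) (by norm_num) (by linarith)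
    (mul_le_mul_of_nonneg_right vkLowerConst_nu3_le (vkScale_pos hL1).le)
    (vkThreshold_vkLowerConst_mul_vkScale_le (by norm_num) (by norm_num) (by norm_num)
      (by linarith [le_log_of_le hL]) hL1 (log_pos (by linarith)))
    (le_vkThreshold_mul_vkScale_nu3 hL)
  exact ⟨u, hlower.trans hlo, hu, hlo, hhi⟩

end Numerical

theorem t0_bounds_nu3 (x : ℝ) (hx : Real.exp (2.8e10) ≤ x) :
    ∃ t₀ : ℝ, (3000175332800 : ℝ) ≤ t₀ ∧
      MonotoneOn (fun t => Real.exp (-(nu3 t) * Real.log x) / t)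
        (Set.Icc (3000175332800 : ℝ) t₀) ∧
      AntitoneOn (fun t => Real.exp (-(nu3 t) * Real.log x) / t) (Set.Ici t₀) ∧
      (2 / (3 * 57.54) : ℝ) ^ ((3:ℝ)/5) * ((5:ℝ)/3) ^ ((1:ℝ)/5) *
          Real.log x ^ ((3:ℝ)/5) / Real.log (Real.log x) ^ ((1:ℝ)/5) ≤ Real.log t₀ ∧
      Real.log t₀ ≤
        0.08228 * Real.log x ^ ((3:ℝ)/5) / Real.log (Real.log x) ^ ((1:ℝ)/5) := by
  have hL : 2.8e10 ≤ log x := (le_log_iff_exp_le ((exp_pos _).trans_le hx)).2 hx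
  obtain ⟨u, hu30, hu, hlo, hhi⟩ := exists_vkThreshold_nu3_eq hL
  have hu1 : 1 < u := by linarith
  have hnu3 : nu3 = vkWidth 57.54 (2 / 3) (1 / 3) := rfl
  rw [mul_div_assoc, mul_div_assoc, ← vkScale_nu3, ← vkLowerConst_nu3, hnu3, ← hu]
  rw [← hu] at hlo hhi
  refine ⟨exp u, le_exp_thirty.trans (exp_le_exp.2 hu30), ?_, ?_, ?_, ?_⟩
  · exact (monotoneOn_exp_neg_vkWidth (by norm_num) (by norm_num) (by norm_num) hu1).mono
      fun t ht => ⟨by linarith [exp_one_lt_d9, ht.1], ht.2⟩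
  · exact antitoneOn_exp_neg_vkWidth (by norm_num) (by norm_num) (by norm_num) hu1
  · rwa [log_exp]
  · rwa [log_exp]
end
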